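/- Let X be a topological space, Y a Hausdorff space, and Z a Hausdorff space. Let f : X × Y → Z be continuous, let x₀ ∈ X, y₀ ∈ Y, and set z₀ = f(x₀, y₀). Let W ⊆ Y be a compact set that is a neighborhood of y₀ and such that y₀ is the only point y ∈ W with f(x₀, y) = z₀. Then for every compact set K ⊆ interior(W) that is a neighborhood of y₀, there exists a neighborhood V of x₀ in X such that for all x ∈ V and all y ∈ W, f(x, y) = z₀ implies y ∈ K. -/

import Mathlib

open Filter Topology

section

variable {X Y Z : Type*} [TopologicalSpace X] [TopologicalSpace Y] [TopologicalSpace Z]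

theorem eventually_forall_mem_imp_mem_of_isCompact {E : Set (X × Y)} {x₀ : X} {W K : Set Y}
    (hW : IsCompact W) (hK : ∀ y ∈ W, (x₀, y) ∈ closure E → K ∈ 𝓝 y) :
    ∀ᶠ x in 𝓝 x₀, ∀ y ∈ W, (x, y) ∈ E → y ∈ K := by
  refine hW.eventually_forall_of_forall_eventually fun y hy ↦ ?_
  by_cases hyE : (x₀, y) ∈ closure E
  · have snd_mem : ∀ᶠ p : X × Y in 𝓝 (x₀, y), p.2 ∈ K :=
      continuousAt_snd.eventually_mem (hK y hy hyE)
    exact snd_mem.mono fun _ hp _ ↦ hp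
  · have notMem : ∀ᶠ p in 𝓝 (x₀, y), p ∉ E := by
      rwa [mem_closure_iff_frequently, not_frequently] at hyE
    exact notMem.mono fun _ hp hpE ↦ absurd hpE hp

theorem eq_of_mem_closure_fiber [T1Space Z] {f : X → Z} {x : X} {z : Z}
    (hf : ContinuousAt f x) (hx : x ∈ closure (f ⁻¹' {z})) : f x = z := by
  have mem_closure : f x ∈ closure {z} :=
    closure_mono (Set.image_preimage_subset f {z}) (mem_closure_image hf hx)
  rwa [closure_singleton] at mem_closure

theorem fiber_localization_general [T1Space Z] {f : X × Y → Z} {x₀ : X} {z₀ : Z} {W K : Set Y}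
    (hW : IsCompact W) (hf : ∀ y ∈ W, ContinuousAt f (x₀, y))
    (hK : ∀ y ∈ W, f (x₀, y) = z₀ → K ∈ 𝓝 y) :
    ∀ᶠ x in 𝓝 x₀, ∀ y ∈ W, f (x, y) = z₀ → y ∈ K :=
  eventually_forall_mem_imp_mem_of_isCompact (E := f ⁻¹' {z₀}) hW fun y hy hyE ↦
    hK y hy (eq_of_mem_closure_fiber (hf y hy) hyE)

end

/-- Fiber localization: solutions `y ∈ W` of `f (x, y) = z₀` stay inside any compact
neighborhood `K ⊆ interior W` of `y₀` for all `x` close enough to `x₀`. -/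
theorem fiber_localization
    {X Y Z : Type*} [TopologicalSpace X] [TopologicalSpace Y] [T2Space Y]
    [TopologicalSpace Z] [T2Space Z]
    (f : X × Y → Z) (hf : Continuous f) (x₀ : X) (y₀ : Y)
    (W : Set Y) (hWcomp : IsCompact W) (hWnhds : W ∈ nhds y₀)
    (huniq : ∀ y ∈ W, f (x₀, y) = f (x₀, y₀) → y = y₀) :
    ∀ K : Set Y, IsCompact K → K ⊆ interior W → K ∈ nhds y₀ →
      ∃ V ∈ nhds x₀, ∀ x ∈ V, ∀ y ∈ W, f (x, y) = f (x₀, y₀) → y ∈ K :=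
  fun _ _ _ hK ↦ (fiber_localization_general hWcomp (fun _ _ ↦ hf.continuousAt)
    fun y hy hfy ↦ (huniq y hy hfy).symm ▸ hK).exists_mem
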